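/- arXiv:2010.16329 — 2 statements merged into one kernel-verified Lean document; each statement's English description precedes it below -/
import Mathlib

section
/- Let k be a field and π_1 the nilpotent endomorphism of V = k^6 given in a basis e_1,…,e_6 adapted to the flag V_1 = ⟨e_1,e_2⟩ ⊂ V_2 = ⟨e_1,…,e_4⟩ ⊂ V by π_1(e_3) = e_1, π_1(e_4) = e_2, and π_1(e_i) = 0 otherwise. Then π_1 satisfies π_1(V_i) ⊆ V_{i−1}, π_1^2 = 0, and its Jordan partition is (2,2,1,1) (dual/Hodge partition (4,2)); moreover any endomorphism π of V with π(V_i) ⊆ V_{i−1} whose restriction to V_2 equals π_1|_{V_2} satisfies: if π^2 = 0 then π(V) ⊆ V_1 and dim ker π ≥ 4, hence π does not have Jordan partition (2,2,2). -/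
/-- The matrix of `π₁` on `k^6`: `π₁ e₃ = e₁`, `π₁ e₄ = e₂` (0-indexed: `e_2 ↦ e_0`,
`e_3 ↦ e_1`), all other basis vectors to `0`. -/
def stmt9Mat (k : Type*) [Field k] : Matrix (Fin 6) (Fin 6) k :=
  Matrix.of fun i j => if (i = 0 ∧ j = 2) ∨ (i = 1 ∧ j = 3) then 1 else 0

def stmt9pi (k : Type*) [Field k] : (Fin 6 → k) →ₗ[k] (Fin 6 → k) :=
  Matrix.toLin' (stmt9Mat k)

/-- `V_1 = ⟨e_1, e_2⟩` (0-indexed `e_0, e_1`). -/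
def stmt9V1 (k : Type*) [Field k] : Submodule k (Fin 6 → k) :=
  Submodule.span k {Pi.single (0 : Fin 6) (1 : k), Pi.single (1 : Fin 6) (1 : k)}

/-- `V_2 = ⟨e_1, …, e_4⟩`. -/
def stmt9V2 (k : Type*) [Field k] : Submodule k (Fin 6 → k) :=
  Submodule.span k {Pi.single (0 : Fin 6) (1 : k), Pi.single (1 : Fin 6) (1 : k),
    Pi.single (2 : Fin 6) (1 : k), Pi.single (3 : Fin 6) (1 : k)}

/-!
If `π` agrees with `π₁` on a subspace `W` containing the range of `π`, then `π² = π₁ ∘ π`, so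
`π² = 0` forces the range of `π` into `W ⊓ ker π₁`. For `W = V₂` this intersection is the plane
`V₁`, and rank-nullity bounds `dim ker π` below by `6 - 2`.
-/

theorem range_le_inf_ker_of_comp_self_eq_zero {R M : Type*} [Semiring R] [AddCommMonoid M]
    [Module R M] {W : Submodule R M} {f g : M →ₗ[R] M} (hrange : LinearMap.range f ≤ W)
    (hfg : Set.EqOn f g W) (hsq : f ∘ₗ f = 0) :
    LinearMap.range f ≤ W ⊓ LinearMap.ker g := by
  refine le_inf hrange fun y hy => ?_
  rw [LinearMap.mem_ker, ← hfg (hrange hy)]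
  exact LinearMap.range_le_ker_iff.mpr hsq hy

theorem finrank_le_finrank_add_finrank_ker_of_range_le {K V W : Type*} [DivisionRing K]
    [AddCommGroup V] [Module K V] [FiniteDimensional K V] [AddCommGroup W] [Module K W]
    {f : V →ₗ[K] W} {U : Submodule K W} [FiniteDimensional K U] (h : LinearMap.range f ≤ U) :
    Module.finrank K V ≤ Module.finrank K U + Module.finrank K (LinearMap.ker f) := by
  rw [← f.finrank_range_add_finrank_ker]
  exact Nat.add_le_add_right (Submodule.finrank_mono h) _

section Flag

variable (k : Type*) [Field k]

theorem stmt9V1_eq_spanSubset : stmt9V1 k = Pi.spanSubset k {0, 1} := by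
  simp only [stmt9V1, Pi.spanSubset, Set.image_pair, Pi.basisFun_apply]

theorem stmt9V2_eq_spanSubset : stmt9V2 k = Pi.spanSubset k {0, 1, 2, 3} := by
  simp only [stmt9V2, Pi.spanSubset, Set.image_insert_eq, Set.image_singleton, Pi.basisFun_apply]

theorem finrank_stmt9V1 : Module.finrank k (stmt9V1 k) = 2 := by
  rw [stmt9V1_eq_spanSubset, Pi.dim_spanSubset, Set.ncard_pair zero_ne_one]

variable {k}

theorem mem_stmt9V1_iff {x : Fin 6 → k} :
    x ∈ stmt9V1 k ↔ x 2 = 0 ∧ x 3 = 0 ∧ x 4 = 0 ∧ x 5 = 0 := by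
  simp [stmt9V1_eq_spanSubset, Pi.mem_spanSubset_iff, Fin.forall_fin_succ]

theorem mem_stmt9V2_iff {x : Fin 6 → k} : x ∈ stmt9V2 k ↔ x 4 = 0 ∧ x 5 = 0 := by
  simp [stmt9V2_eq_spanSubset, Pi.mem_spanSubset_iff, Fin.forall_fin_succ]

theorem stmt9pi_apply (x : Fin 6 → k) : stmt9pi k x = ![x 2, x 3, 0, 0, 0, 0] := by
  ext i
  fin_cases i <;> simp [stmt9pi, stmt9Mat, Matrix.mulVec, dotProduct]

variable (k)

theorem range_stmt9pi : LinearMap.range (stmt9pi k) = stmt9V1 k := by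
  apply le_antisymm
  · rintro _ ⟨x, rfl⟩
    simp [mem_stmt9V1_iff, stmt9pi_apply]
  · intro x hx
    obtain ⟨h2, h3, h4, h5⟩ := mem_stmt9V1_iff.mp hx
    refine ⟨![0, 0, x 0, x 1, 0, 0], ?_⟩
    ext i
    fin_cases i <;> simp [stmt9pi_apply, h2, h3, h4, h5]

theorem stmt9V2_inf_ker_stmt9pi : stmt9V2 k ⊓ LinearMap.ker (stmt9pi k) = stmt9V1 k := by
  ext x
  have hker : stmt9pi k x = 0 ↔ x 2 = 0 ∧ x 3 = 0 := by simp [stmt9pi_apply]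
  rw [Submodule.mem_inf, LinearMap.mem_ker, mem_stmt9V2_iff, hker, mem_stmt9V1_iff, and_comm,
    and_assoc]

theorem finrank_range_stmt9pi : Module.finrank k (LinearMap.range (stmt9pi k)) = 2 := by
  rw [range_stmt9pi, finrank_stmt9V1]

theorem finrank_ker_stmt9pi : Module.finrank k (LinearMap.ker (stmt9pi k)) = 4 := by
  have hrank_nullity := (stmt9pi k).finrank_range_add_finrank_ker
  rw [finrank_range_stmt9pi, Module.finrank_fin_fun] at hrank_nullity
  omega

end Flag

/-- `π₁` satisfies `π₁(V_i) ⊆ V_{i−1}`, `π₁² = 0`, has Jordan partition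
`(2,2,1,1)` (for a square-zero endomorphism of `k^6`: rank `2`, kernel of dimension `4`);
and any `π` with `π(V_i) ⊆ V_{i−1}` restricting to `π₁` on `V_2` satisfies: if `π² = 0`
then `π(V) ⊆ V_1` and `dim ker π ≥ 4`, hence `π` does not have Jordan partition `(2,2,2)`
(i.e. `dim ker π ≠ 3`). -/
theorem stmt_9 (k : Type*) [Field k] :
    Submodule.map (stmt9pi k) ⊤ ≤ stmt9V2 k ∧
    Submodule.map (stmt9pi k) (stmt9V2 k) ≤ stmt9V1 k ∧
    Submodule.map (stmt9pi k) (stmt9V1 k) = ⊥ ∧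
    stmt9pi k ∘ₗ stmt9pi k = 0 ∧
    Module.finrank k (LinearMap.range (stmt9pi k)) = 2 ∧
    Module.finrank k (LinearMap.ker (stmt9pi k)) = 4 ∧
    ∀ π : (Fin 6 → k) →ₗ[k] (Fin 6 → k),
      Submodule.map π ⊤ ≤ stmt9V2 k →
      Submodule.map π (stmt9V2 k) ≤ stmt9V1 k →
      Submodule.map π (stmt9V1 k) = ⊥ →
      (∀ x ∈ stmt9V2 k, π x = stmt9pi k x) →
      π ∘ₗ π = 0 →
      (Submodule.map π ⊤ ≤ stmt9V1 k ∧
       4 ≤ Module.finrank k (LinearMap.ker π) ∧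
       Module.finrank k (LinearMap.ker π) ≠ 3) := by
  have hrange := range_stmt9pi k
  obtain ⟨hV1V2, hV1ker⟩ := le_inf_iff.mp (stmt9V2_inf_ker_stmt9pi k).ge
  refine ⟨?_, LinearMap.map_le_range.trans hrange.le, LinearMap.le_ker_iff_map.mp hV1ker,
    LinearMap.range_le_ker_iff.mp (hrange.trans_le hV1ker), finrank_range_stmt9pi k,
    finrank_ker_stmt9pi k, ?_⟩
  · rw [Submodule.map_top, hrange]
    exact hV1V2
  · intro π hπ _ _ hEqOn hsq
    rw [Submodule.map_top] at hπ ⊢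
    have hπV1 : LinearMap.range π ≤ stmt9V1 k :=
      (range_le_inf_ker_of_comp_self_eq_zero hπ hEqOn hsq).trans (stmt9V2_inf_ker_stmt9pi k).le
    have hker := finrank_le_finrank_add_finrank_ker_of_range_le hπV1
    rw [Module.finrank_fin_fun, finrank_stmt9V1] at hker
    have hker_ge : 4 ≤ Module.finrank k (LinearMap.ker π) := by omega
    exact ⟨hπV1, hker_ge, by omega⟩
end

section
/- Let k be a field of characteristic p, and consider the moduli of pairs (ω^[1] ⊆ F) where F ⊆ Λ := k^4 (with basis πe_1, πe_2, e_1, e_2 and π acting by π(e_i) = πe_i, π(πe_i) = 0) is a 2-dimensional subspace totally isotropic for the symplectic form J with J(πe_i, e_i) = 1, J(e_i, πe_i) = −1 and all other pairings of basis vectors zero, ω^[1] ⊆ F is 1-dimensional with π·ω^[1] = 0 and π·F ⊆ ω^[1]. On the affine chart where F is the column span of the matrix with rows (1,0),(x,a),(0,b),(0,y) (in basis πe_1, πe_2, e_1, e_2, first column spanning ω^[1]), the conditions π F ⊆ ω^[1] and F totally isotropic are equivalent to y = bx and b(1 + x^2) = 0. -/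
/-- The action of `π` on `Λ = k^4` in the basis `(πe₁, πe₂, e₁, e₂)`:
`π · e₁ = πe₁`, `π · e₂ = πe₂`, `π · πeᵢ = 0`. -/
def stmt10pi (k : Type*) [Field k] : (Fin 4 → k) →ₗ[k] (Fin 4 → k) :=
  Matrix.toLin' (Matrix.of fun i j : Fin 4 =>
    if (i = 0 ∧ j = 2) ∨ (i = 1 ∧ j = 3) then (1 : k) else 0)

/-- The symplectic form `J` on `Λ = k^4` with `J(πeᵢ, eᵢ) = 1`, `J(eᵢ, πeᵢ) = −1`, all
other pairings of basis vectors zero. -/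
def stmt10J (k : Type*) [Field k] (v w : Fin 4 → k) : k :=
  v 0 * w 2 - v 2 * w 0 + v 1 * w 3 - v 3 * w 1

/-!
Since `π` kills `ω^[1] = ⟨u⟩` and `J` is alternating, both conditions on `F = ⟨u, v⟩`, for
`u = (1, x, 0, 0)` and `v = (0, a, b, y)`, can be tested on single elements: they say
`π v ∈ ⟨u⟩` and `J(u, v) = 0`. As `π v = (b, y, 0, 0)`, the first means `y = b x`; the second is
`b + x y = 0`, which after substituting `y = b x` becomes `b (1 + x²) = 0`. The argument takes
place over an arbitrary commutative ring, so it describes the chart as a scheme and not only its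
points over fields.
-/

section SpanPair

open Submodule

variable {R M N : Type*}

theorem forall_mem_span_pair_apply_mem_iff [Semiring R] [AddCommMonoid M] [AddCommMonoid N]
    [Module R M] [Module R N] {f : M →ₗ[R] N} {P : Submodule R N} {u v : M} (hu : f u ∈ P) :
    (∀ z ∈ span R {u, v}, f z ∈ P) ↔ f v ∈ P := by
  change span R {u, v} ≤ P.comap f ↔ f v ∈ P
  simp only [span_le, Set.pair_subset_iff, SetLike.mem_coe, mem_comap, hu, true_and]

variable [CommRing R] [AddCommGroup M] [AddCommGroup N] [Module R M] [Module R N]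
  {B : M →ₗ[R] M →ₗ[R] N}

theorem apply_smul_add_smul_of_isAlt (hB : B.IsAlt) (u v : M) (c d c' d' : R) :
    B (c • u + d • v) (c' • u + d' • v) = (c * d' - d * c') • B u v := by
  have hvu : B v u = -B u v := (hB.neg u v).symm
  simp only [map_add, map_smul, LinearMap.add_apply, LinearMap.smul_apply, hB u, hB v, hvu]
  module

theorem forall_mem_span_pair_eq_zero_iff_of_isAlt (hB : B.IsAlt) {u v : M} :
    (∀ z ∈ span R {u, v}, ∀ w ∈ span R {u, v}, B z w = 0) ↔ B u v = 0 := by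
  constructor
  · intro h
    exact h u (mem_span_of_mem (by simp)) v (mem_span_of_mem (by simp))
  · intro huv z hz w hw
    obtain ⟨c, d, rfl⟩ := mem_span_pair.1 hz
    obtain ⟨c', d', rfl⟩ := mem_span_pair.1 hw
    rw [apply_smul_add_smul_of_isAlt hB, huv, smul_zero]

end SpanPair

section LocalModel

/-- Multiplication by the uniformizer `π` on `Λ = R^4`, in the basis `(πe₁, πe₂, e₁, e₂)`. It
extends `stmt10pi` from fields to semirings. -/
def uniformizer (R : Type*) [Semiring R] : (Fin 4 → R) →ₗ[R] (Fin 4 → R) where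
  toFun v := ![v 2, v 3, 0, 0]
  map_add' v w := by simp
  map_smul' c v := by simp

/-- The symplectic form on `Λ = R^4`, in the basis `(πe₁, πe₂, e₁, e₂)`, as a bilinear form. It
extends `stmt10J` from fields to commutative rings. -/
def symplecticForm (R : Type*) [CommRing R] : (Fin 4 → R) →ₗ[R] (Fin 4 → R) →ₗ[R] R :=
  LinearMap.mk₂ R (fun v w => v 0 * w 2 - v 2 * w 0 + v 1 * w 3 - v 3 * w 1)
    (fun _ _ _ => by simp only [Pi.add_apply]; ring)
    (fun _ _ _ => by simp only [Pi.smul_apply, smul_eq_mul]; ring)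
    (fun _ _ _ => by simp only [Pi.add_apply]; ring)
    (fun _ _ _ => by simp only [Pi.smul_apply, smul_eq_mul]; ring)

theorem uniformizer_apply {R : Type*} [Semiring R] (v : Fin 4 → R) :
    uniformizer R v = ![v 2, v 3, 0, 0] := rfl

theorem uniformizer_chart_generator_mem_iff {R : Type*} [Semiring R] {x a b y : R} :
    uniformizer R ![0, a, b, y] ∈ Submodule.span R {![1, x, 0, 0]} ↔ y = b * x := by
  simp [Submodule.mem_span_singleton, uniformizer_apply, eq_comm]

theorem stmt10pi_eq_uniformizer (k : Type*) [Field k] : stmt10pi k = uniformizer k := by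
  ext v i
  fin_cases v <;> fin_cases i <;> simp [stmt10pi, uniformizer_apply]

theorem stmt10J_eq_symplecticForm {k : Type*} [Field k] (v w : Fin 4 → k) :
    stmt10J k v w = symplecticForm k v w := rfl

variable {R : Type*} [CommRing R]

theorem symplecticForm_apply (v w : Fin 4 → R) :
    symplecticForm R v w = v 0 * w 2 - v 2 * w 0 + v 1 * w 3 - v 3 * w 1 := rfl

theorem isAlt_symplecticForm : (symplecticForm R).IsAlt := fun v => by
  rw [symplecticForm_apply]
  ring

theorem symplecticForm_chart_generators (x a b y : R) :
    symplecticForm R ![1, x, 0, 0] ![0, a, b, y] = b + x * y := by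
  simp [symplecticForm_apply]

theorem stmt_10_general (x a b y : R) :
    ((∀ v ∈ Submodule.span R {![1, x, 0, 0], ![0, a, b, y]},
        uniformizer R v ∈ Submodule.span R {![1, x, 0, 0]}) ∧
      (∀ v ∈ Submodule.span R {![1, x, 0, 0], ![0, a, b, y]},
       ∀ w ∈ Submodule.span R {![1, x, 0, 0], ![0, a, b, y]},
        symplecticForm R v w = 0))
    ↔ (y = b * x ∧ b * (1 + x ^ 2) = 0) := by
  have pi_line : uniformizer R ![1, x, 0, 0] = 0 := by
    simp [uniformizer_apply]
  rw [forall_mem_span_pair_apply_mem_iff (pi_line ▸ zero_mem _),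
    uniformizer_chart_generator_mem_iff,
    forall_mem_span_pair_eq_zero_iff_of_isAlt isAlt_symplecticForm,
    symplecticForm_chart_generators]
  refine and_congr_right fun hy => ?_
  rw [hy, show b + x * (b * x) = b * (1 + x ^ 2) by ring]

end LocalModel

/-- local model for U(1,1), ramified case: on the chart where
`ω^[1] = ⟨(1,x,0,0)⟩` and `F = ω^[1] + ⟨(0,a,b,y)⟩`, the conditions `π F ⊆ ω^[1]` and
`F` totally isotropic for `J` are equivalent to `y = b·x` and `b(1 + x²) = 0`. -/
theorem stmt_10 (p : ℕ) (hp : p.Prime) (k : Type*) [Field k] [CharP k p]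
    (x a b y : k) :
    ((∀ v ∈ Submodule.span k {![(1 : k), x, 0, 0], ![(0 : k), a, b, y]},
        stmt10pi k v ∈ Submodule.span k {![(1 : k), x, 0, 0]}) ∧
      (∀ v ∈ Submodule.span k {![(1 : k), x, 0, 0], ![(0 : k), a, b, y]},
       ∀ w ∈ Submodule.span k {![(1 : k), x, 0, 0], ![(0 : k), a, b, y]},
        stmt10J k v w = 0))
    ↔ (y = b * x ∧ b * (1 + x ^ 2) = 0) := by
  simp only [stmt10pi_eq_uniformizer, stmt10J_eq_symplecticForm]
  exact stmt_10_general x a b y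
end
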